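/- Let G be a finite simple graph and let u and v be adjacent vertices of G, each of degree at most 3. If G − {u, v} is (2,1)-decomposable, then G is (2,1)-decomposable. (This is the reducibility behind Lemma 2.6(2): a vertex-minimal graph admitting no (2,1)-decomposition does not contain two adjacent 3-vertices.) -/

import Mathlib

open SimpleGraph

/-- A graph `H` is `d`-degenerate: every induced subgraph on a nonempty vertex set
has a vertex of degree at most `d` (within that induced subgraph). -/
def Degenerate {V : Type*} (d : ℕ) (H : SimpleGraph V) : Prop :=
  ∀ s : Set V, s.Nonempty → ∃ v ∈ s, (H.neighborSet v ∩ s).ncard ≤ d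

/-- The graph `H` has maximum degree at most `h`. -/
def MaxDegreeLE {V : Type*} (h : ℕ) (H : SimpleGraph V) : Prop :=
  ∀ v : V, (H.neighborSet v).ncard ≤ h

/-- A graph `G` is `(d,h)`-decomposable: its edge set is partitioned into the edge
sets of two spanning subgraphs `H₁` and `H₂`, where `H₁` is `d`-degenerate and
`H₂` has maximum degree at most `h`. -/
def Decomposable {V : Type*} (d h : ℕ) (G : SimpleGraph V) : Prop :=
  ∃ H₁ H₂ : SimpleGraph V, H₁ ⊔ H₂ = G ∧ Disjoint H₁ H₂ ∧
    Degenerate d H₁ ∧ MaxDegreeLE h H₂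

/-!
The edge `uv` goes to the part of maximum degree at most `1`: in a decomposition of `G - {u, v}`
neither `u` nor `v` is covered by that part, so it stays a matching. All remaining edges at `u`
and `v` go to the `2`-degenerate part, where `u` and `v` have at most two neighbours left and
hence serve as the low-degree vertex of every vertex set that meets `{u, v}`.
-/

section Extension

variable {V W : Type*} {d h : ℕ}

/-- The bound uses `encard` because `ncard` is `0` on an infinite neighbourhood. -/
theorem Degenerate.of_induce_compl {H : SimpleGraph V} {s : Set V}
    (hs : ∀ v ∈ s, (H.neighborSet v).encard ≤ d) (hH : Degenerate d (H.induce sᶜ)) :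
    Degenerate d H := by
  intro t ht
  by_cases hts : t ⊆ sᶜ
  · obtain ⟨x, hx⟩ := ht
    obtain ⟨w, hw, hdeg⟩ := hH (Subtype.val ⁻¹' t) ⟨⟨x, hts hx⟩, hx⟩
    have hrange : H.neighborSet w ∩ t ⊆ Set.range (Subtype.val : ↥sᶜ → V) :=
      Subtype.range_val ▸ Set.inter_subset_right.trans hts
    rw [neighborSet_induce, ← Set.preimage_inter,
      Set.ncard_preimage_of_injective_subset_range Subtype.val_injective hrange] at hdeg
    exact ⟨w, hw, hdeg⟩
  · obtain ⟨v, hvt, hvs⟩ := Set.not_subset.mp hts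
    obtain ⟨hfin, hdeg⟩ :=
      Set.encard_le_coe_iff_finite_ncard_le.mp (hs v (Set.notMem_compl_iff.mp hvs))
    exact ⟨v, hvt, (Set.ncard_inter_le_ncard_left _ _ hfin).trans hdeg⟩

theorem MaxDegreeLE.map {H : SimpleGraph V} (hH : MaxDegreeLE h H) (f : V ↪ W) :
    MaxDegreeLE h (H.map f) := by
  intro w
  by_cases hw : (H.map f).IsIsolated w
  · simp [hw]
  · rw [← mem_support_iff_not_isIsolated, support_map] at hw
    obtain ⟨v, -, rfl⟩ := hw
    rw [neighborSet_map, Set.ncard_image_of_injective _ f.injective]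
    exact hH v

theorem MaxDegreeLE.sup_of_disjoint_support {H K : SimpleGraph V} (hH : MaxDegreeLE h H)
    (hK : MaxDegreeLE h K) (hHK : Disjoint H.support K.support) : MaxDegreeLE h (H ⊔ K) := by
  intro v
  rw [neighborSet_sup]
  by_cases hv : v ∈ H.support
  · have hvK : K.IsIsolated v := K.notMem_support_iff_isIsolated.mp (hHK.notMem_of_mem_left hv)
    simpa [hvK] using hH v
  · have hvH : H.IsIsolated v := H.notMem_support_iff_isIsolated.mp hv
    simpa [hvH] using hK v

theorem induce_compl_eq_bot_of_support_subset {M : SimpleGraph V} {s : Set V}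
    (hM : M.support ⊆ s) : M.induce sᶜ = ⊥ :=
  eq_bot_iff.mpr fun v _ hvw ↦ v.2 (hM (Adj.mem_support_left (G := M) hvw))

/-- The edges of `M` join the bounded-degree part, all other edges meeting `s` join the
degenerate part. -/
theorem Decomposable.of_induce_compl {G M : SimpleGraph V} {s : Set V} (hMG : M ≤ G)
    (hMs : M.support ⊆ s) (hM : MaxDegreeLE h M)
    (hs : ∀ v ∈ s, ((G \ M).neighborSet v).encard ≤ d)
    (hG : Decomposable d h (G.induce sᶜ)) : Decomposable d h G := by
  obtain ⟨H₁, H₂, hsup, hdisj, hdeg, hmax⟩ := hG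
  have hle : H₂.spanningCoe ⊔ M ≤ G :=
    sup_le ((map_le_iff_le_comap ..).mpr (le_sup_right.trans_eq hsup)) hMG
  have hinduce : (G \ (H₂.spanningCoe ⊔ M)).induce sᶜ = H₁ := calc
    _ = G.induce sᶜ \ (H₂.spanningCoe.induce sᶜ ⊔ M.induce sᶜ) := rfl
    _ = (H₁ ⊔ H₂) \ H₂ := by
      rw [induce_spanningCoe, induce_compl_eq_bot_of_support_subset hMs, sup_bot_eq, hsup]
    _ = H₁ := hdisj.sup_sdiff_cancel_right
  have hsdiff : G \ (H₂.spanningCoe ⊔ M) ≤ G \ M := sdiff_le_sdiff_left le_sup_right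
  have hdegree : ∀ v ∈ s, ((G \ (H₂.spanningCoe ⊔ M)).neighborSet v).encard ≤ d := fun v hv ↦
    (Set.encard_le_encard fun _ hw ↦ hsdiff hw).trans (hs v hv)
  have hsupport : Disjoint H₂.spanningCoe.support M.support := by
    rw [support_spanningCoe]
    exact Set.disjoint_left.mpr fun _ ⟨w, _, hw⟩ hM ↦ w.2 (hMs (hw ▸ hM))
  exact ⟨G \ (H₂.spanningCoe ⊔ M), H₂.spanningCoe ⊔ M, sdiff_sup_cancel hle,
    disjoint_sdiff_self_left, .of_induce_compl hdegree (hinduce ▸ hdeg),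
    (hmax.map _).sup_of_disjoint_support hM hsupport⟩

end Extension

section Edge

variable {V : Type*}

theorem support_edge_subset (u v : V) : (edge u v).support ⊆ {u, v} := by
  rintro x ⟨y, hxy⟩
  grind

theorem maxDegreeLE_one_edge (u v : V) : MaxDegreeLE 1 (edge u v) := by
  intro w
  have hw : ((edge u v).neighborSet w).Subsingleton := by
    intro x hx y hy
    grind [mem_neighborSet]
  exact (Set.ncard_le_one hw.finite).mpr hw

theorem encard_neighborSet_sdiff_edge_add_one {G : SimpleGraph V} {u v : V} (huv : G.Adj u v) :
    ((G \ edge u v).neighborSet u).encard + 1 = (G.neighborSet u).encard := by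
  have hsdiff : (G \ edge u v).neighborSet u = G.neighborSet u \ {v} := by
    ext w
    grind [mem_neighborSet, sdiff_adj, huv.ne]
  rw [hsdiff, Set.encard_sdiff_singleton_add_one ((G.mem_neighborSet u v).mpr huv)]

end Edge

theorem stmt_7_general {V : Type*} {d h : ℕ} (hh : 1 ≤ h) (G : SimpleGraph V) (u v : V)
    (huv : G.Adj u v) (hdu : (G.neighborSet u).encard ≤ (d + 1 : ℕ))
    (hdv : (G.neighborSet v).encard ≤ (d + 1 : ℕ))
    (hdec : Decomposable d h (G.induce {w : V | w ≠ u ∧ w ≠ v})) :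
    Decomposable d h G := by
  have hcompl : {w : V | w ≠ u ∧ w ≠ v} = ({u, v} : Set V)ᶜ := by ext; simp
  have hmax : MaxDegreeLE h (edge u v) := fun w ↦ (maxDegreeLE_one_edge u v w).trans hh
  refine .of_induce_compl (G.edge_le_iff.mpr (.inr huv)) (support_edge_subset u v) hmax ?_
    (hcompl ▸ hdec)
  rintro x (rfl | rfl)
  · rw [← encard_neighborSet_sdiff_edge_add_one huv] at hdu
    simpa using hdu
  · rw [← encard_neighborSet_sdiff_edge_add_one huv.symm, edge_comm] at hdv
    simpa using hdv

theorem stmt_7 {V : Type*} [Fintype V] (G : SimpleGraph V) (u v : V)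
    (huv : G.Adj u v)
    (hdu : (G.neighborSet u).ncard ≤ 3) (hdv : (G.neighborSet v).ncard ≤ 3)
    (hdec : Decomposable 2 1 (G.induce {w : V | w ≠ u ∧ w ≠ v})) :
    Decomposable 2 1 G := by
  have hfin {x : V} (hx : (G.neighborSet x).ncard ≤ 3) : (G.neighborSet x).encard ≤ (3 : ℕ) :=
    Set.encard_le_coe_iff_finite_ncard_le.mpr ⟨Set.toFinite _, hx⟩
  exact stmt_7_general le_rfl G u v huv (hfin hdu) (hfin hdv) hdec
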